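/- Let B be a local ring with maximal ideal m_B whose residue field k has at least 5 elements. Let L_B denote the R_B-submodule of \widetilde{RP}(B) generated by the elements [au] − [a] and ⟨⟨u⟩⟩C_B, for a ∈ W_B and u ∈ 1 + m_B. Then there is a short exact sequence of R_B-modules 0 → L_B → \widetilde{RP}(B) → \widetilde{RP}(k) → 0, where the right-hand map is the functorial map induced by the reduction B ↠ k. -/

import Mathlib

/-!
Surjectivity of `ρ` and `L_B ⊆ ker ρ` are direct, because units and elements of `W_k` lift to `B`.
For `ker ρ ⊆ L_B` one factors the quotient map `\widetilde{RP}(B) → M := \widetilde{RP}(B)/L_B`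
through `ρ` (`exists_theta`). In `M` the class of `[a]` depends only on the residue class of `a`, so
the relations of `\widetilde{RP}(k)` lift; what is not evident is that `M` is an `R_k`-module, that
is, that `⟨w⟩` acts trivially on `M` for every `w ∈ 1 + m_B` (`RedSys.F_eq_zero`).

Write `F w x = ⟨⟨w⟩⟩[x] ∈ M` for `w ∈ 1 + m_B` and `x ∈ k`, `x ≠ 0, 1`. Since `⟨⟨w⟩⟩C_B = 0`, the
terms `F w x`, `F w x⁻¹`, `F w (1 - x)` agree up to the factor `-⟨-1⟩`, and two five-term relations
then give `⟨-a⟩ F w ā = F w ā` for every lift `a` of `ā`. As this holds for all lifts, `1 + m_B` acts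
trivially on `F w x`; it follows that `2 F w x = 0` and that `F` is additive in `w`.

The five-term relations of `(a, b)` and `(a(1 + x), b)` with `x ∈ m_B` have the same residue
classes as entries but different coefficients. Their difference is the relation `F_pair`
`F (1+x) (ce) + F (1-xt) (ce) = ⟨e⟩ F (1+x) c + F (1-xt) e`, with `t ≡ (1-e)/(e(1-c))`.
Changing the lift `t` shows that `F (1+xy) z` is independent of `z` for `x, y ∈ m_B`, and an
expression independent of `z` is zero by the five-term relation (`eq_zero_of_const`). Hence
`x ↦ F (1+x) z` is additive on `m_B`. Using `F_pair` twice with `c` and `e` exchanged shows that all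
units act trivially on `F (1+x) z`; then the symmetry of `F_pair` in `c` and `e` gives
`F (1+y) c = F (1+y) e`, so `F (1+y) z` is again independent of `z` and vanishes.
-/

noncomputable section

/-- The group of square classes `R^× / (R^×)²`, denoted `G_R`. -/
def SqCl (R : Type*) [CommRing R] : Type _ :=
  Rˣ ⧸ (powMonoidHom 2 : Rˣ →* Rˣ).range

instance (R : Type*) [CommRing R] : CommGroup (SqCl R) :=
  QuotientGroup.Quotient.commGroup _

/-- The class of a unit in the group of square classes. -/
def sqc {R : Type*} [CommRing R] (u : Rˣ) : SqCl R := QuotientGroup.mk u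

/-- The group ring `κ[G_R]` of square classes, denoted `R_R` in the paper (for `κ = ℤ`;
for `κ = ℤ[1/2]` it is `R_R[1/2]`). -/
abbrev GRing (κ : Type*) [CommRing κ] (R : Type*) [CommRing R] : Type _ :=
  MonoidAlgebra κ (SqCl R)

/-- `⟨u⟩`, the square class of a unit `u` viewed in the group ring. -/
def gcl (κ : Type*) [CommRing κ] {R : Type*} [CommRing R] (u : Rˣ) : GRing κ R :=
  MonoidAlgebra.of κ (SqCl R) (sqc u)

/-- `⟨⟨u⟩⟩ := ⟨u⟩ - 1`. -/
def gcc (κ : Type*) [CommRing κ] {R : Type*} [CommRing R] (u : Rˣ) : GRing κ R :=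
  gcl κ u - 1

/-- The augmentation ideal `I_R`, generated by the elements `g - 1`, `g ∈ G_R`. -/
def augId (κ : Type*) [CommRing κ] (R : Type*) [CommRing R] : Ideal (GRing κ R) :=
  Ideal.span (Set.range fun g : SqCl R => (MonoidAlgebra.of κ (SqCl R) g - 1))

/-- `p₋₁⁺ := ⟨-1⟩ + 1`. -/
def pminus (κ : Type*) [CommRing κ] (R : Type*) [CommRing R] : GRing κ R :=
  gcl κ (-1 : Rˣ) + 1

/-- `W_R = {a ∈ R^× : 1 - a ∈ R^×}`. -/
def WU (R : Type*) [CommRing R] : Type _ := {a : Rˣ // IsUnit ((1 : R) - (a : R))}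

namespace WU

variable {R : Type*} [CommRing R]

instance : CoeHead (WU R) Rˣ := ⟨Subtype.val⟩

/-- `1 - a` as a unit, for `a ∈ W_R`. -/
def usub (a : WU R) : Rˣ := a.2.unit

@[simp] lemma usub_coe (a : WU R) : ((usub a : Rˣ) : R) = 1 - ((a : Rˣ) : R) := a.2.unit_spec

/-- `a - 1` as a unit, for `a ∈ W_R`. -/
def usub' (a : WU R) : Rˣ := -usub a

/-- `a⁻¹ - 1` as a unit, for `a ∈ W_R`. -/
def uinvsub (a : WU R) : Rˣ := (a : Rˣ)⁻¹ * usub a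

/-- `1 - a ∈ W_R` when `a ∈ W_R`. -/
def oneSub (a : WU R) : WU R :=
  ⟨usub a, by rw [usub_coe, sub_sub_cancel]; exact (a : Rˣ).isUnit⟩

/-- `a⁻¹ ∈ W_R` when `a ∈ W_R`. -/
def winv (a : WU R) : WU R := by
  refine ⟨(a : Rˣ)⁻¹, ?_⟩
  have h : (((((a : Rˣ)⁻¹ * (-usub a)) : Rˣ)) : R) = 1 - (((a : Rˣ)⁻¹ : Rˣ) : R) := by
    have h1 := Units.inv_mul (a : Rˣ)
    push_cast [usub_coe]
    linear_combination h1
  rw [← h]; exact Units.isUnit _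

/-- The image of an element of `W_A` under a ring homomorphism `A → B` carrying units to
units, as an element of `W_B`. -/
def mapRH {A B : Type*} [CommRing A] [CommRing B] (f : A →+* B) (a : WU A) : WU B :=
  ⟨Units.map (f : A →* B) (a : Aˣ), by
    have h := a.2.map f
    rw [map_sub, map_one] at h
    simpa using h⟩

end WU

/-- The free `R_R`-module on the symbols `[a]`, `a ∈ W_R`. -/
abbrev preRP (κ : Type*) [CommRing κ] (R : Type*) [CommRing R] : Type _ :=
  WU R →₀ GRing κ R

/-- The basis element `[a]` of the free module. -/
def pregen (κ : Type*) [CommRing κ] {R : Type*} [CommRing R] (a : WU R) : preRP κ R :=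
  Finsupp.single a 1

/-- The set of defining relations of `RP(R)`:  the elements
`[a] - [b] + ⟨a⟩[b/a] - ⟨a⁻¹-1⟩[(1-a⁻¹)/(1-b⁻¹)] - ⟨1-a⟩[(1-a)/(1-b)]`
whenever `a, b, a/b ∈ W_R` (here `c = b/a`, `d = (1-a⁻¹)/(1-b⁻¹)`, `e = (1-a)/(1-b)`). -/
def RPrel (κ : Type*) [CommRing κ] (R : Type*) [CommRing R] : Set (preRP κ R) :=
  { x | ∃ a b c d e : WU R,
      ((c : Rˣ) : R) * ((a : Rˣ) : R) = ((b : Rˣ) : R) ∧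
      ((d : Rˣ) : R) * (1 - (((b : Rˣ)⁻¹ : Rˣ) : R)) = 1 - (((a : Rˣ)⁻¹ : Rˣ) : R) ∧
      ((e : Rˣ) : R) * (1 - ((b : Rˣ) : R)) = 1 - ((a : Rˣ) : R) ∧
      x = pregen κ a - pregen κ b + gcl κ (a : Rˣ) • pregen κ c
          - gcl κ (WU.uinvsub a) • pregen κ d - gcl κ (WU.usub a) • pregen κ e }

/-- The submodule of relations. -/
def RPsub (κ : Type*) [CommRing κ] (R : Type*) [CommRing R] :
    Submodule (GRing κ R) (preRP κ R) :=
  Submodule.span (GRing κ R) (RPrel κ R)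

/-- The refined pre-Bloch group (refined scissors congruence group) `RP(R)`,
as a module over the group ring `R_R`. -/
abbrev RP (κ : Type*) [CommRing κ] (R : Type*) [CommRing R] : Type _ :=
  preRP κ R ⧸ RPsub κ R

/-- The generator `[a]` of `RP(R)`. -/
def rp (κ : Type*) [CommRing κ] {R : Type*} [CommRing R] (a : WU R) : RP κ R :=
  Submodule.Quotient.mk (pregen κ a)

/-- The map `λ₁ : [a] ↦ ⟨⟨a⟩⟩⟨⟨1-a⟩⟩`, defined on the free module. -/
def lamOne (κ : Type*) [CommRing κ] (R : Type*) [CommRing R] :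
    preRP κ R →ₗ[GRing κ R] GRing κ R :=
  Finsupp.linearCombination (GRing κ R)
    (fun a => gcc κ (a : Rˣ) * gcc κ (WU.usub a))

/-- The refined scissors congruence group `RP₁(R) = ker λ₁`, as a submodule of `RP(R)`. -/
def RP1 (κ : Type*) [CommRing κ] (R : Type*) [CommRing R] : Submodule (GRing κ R) (RP κ R) :=
  Submodule.map (RPsub κ R).mkQ (LinearMap.ker (lamOne κ R))

/-- `ψ₁(a) = [a] + ⟨-1⟩[a⁻¹]` for `a ∈ W_R`. -/
def psiOne (κ : Type*) [CommRing κ] {R : Type*} [CommRing R] (a : WU R) : RP κ R :=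
  rp κ a + gcl κ (-1 : Rˣ) • rp κ (WU.winv a)

/-- The submodule `K_R^{(1)}` generated by the elements `ψ₁(a)`, `a ∈ R^×`
(equivalently, by the `ψ₁(a)`, `a ∈ W_R`). -/
def Kpsi (κ : Type*) [CommRing κ] (R : Type*) [CommRing R] : Submodule (GRing κ R) (RP κ R) :=
  Submodule.span (GRing κ R) { x | ∃ a : WU R, x = psiOne κ a }

/-- `\widetilde{RP}(R) := RP(R)/K_R^{(1)}`. -/
abbrev RPt (κ : Type*) [CommRing κ] (R : Type*) [CommRing R] : Type _ :=
  RP κ R ⧸ Kpsi κ R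

/-- The generator `[a]` of `\widetilde{RP}(R)`. -/
def rpt (κ : Type*) [CommRing κ] {R : Type*} [CommRing R] (a : WU R) : RPt κ R :=
  Submodule.Quotient.mk (rp κ a)

/-- The ideal `p₋₁⁺ I_R` of the group ring. -/
def pIdeal (κ : Type*) [CommRing κ] (R : Type*) [CommRing R] : Ideal (GRing κ R) :=
  augId κ R * Ideal.span {pminus κ R}

/-- `\widetilde{RP}₁(R) = ker(λ̃₁ : \widetilde{RP}(R) → I_R²/p₋₁⁺I_R)` as a submodule
of `\widetilde{RP}(R)`. -/
def RPt1 (κ : Type*) [CommRing κ] (R : Type*) [CommRing R] :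
    Submodule (GRing κ R) (RPt κ R) :=
  Submodule.map ((Kpsi κ R).mkQ ∘ₗ (RPsub κ R).mkQ)
    (Submodule.comap (lamOne κ R) (pIdeal κ R))

/-- The expression `C_R(a) = [a] + ⟨-1⟩[1-a] + ⟨⟨1-a⟩⟩ψ₁(a)`;  the constant `C_R ∈ RP(R)` is
this element, for any (every) choice of `a ∈ W_R`. -/
def Cexpr (κ : Type*) [CommRing κ] {R : Type*} [CommRing R] (a : WU R) : RP κ R :=
  rp κ a + gcl κ (-1 : Rˣ) • rp κ (WU.oneSub a) + gcc κ (WU.usub a) • psiOne κ a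

/-- `ℤ[1/2]`, the localization of `ℤ` away from `2`. -/
abbrev Half : Type := Localization.Away (2 : ℤ)

/-- A field is *sufficiently large* if it is infinite, or finite with `p^d` elements
where `d(p-1) > 6`. -/
def SuffLarge (k : Type*) : Prop :=
  Infinite k ∨ ∃ p d : ℕ, p.Prime ∧ Nat.card k = p ^ d ∧ 6 < d * (p - 1)

/-- The map on square classes induced by a ring homomorphism. -/
def sqMapRH {A B : Type*} [CommRing A] [CommRing B] (f : A →+* B) : SqCl A →* SqCl B :=
  QuotientGroup.map _ _ (Units.map (f : A →* B))
    (by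
      rintro x ⟨y, rfl⟩
      exact ⟨Units.map (f : A →* B) y, by simp [powMonoidHom]⟩)

/-- For a module `M` over the group ring `κ[G_R]`, a group `G₀` mapping to `G_R` and a
character `χ : G₀ → {±1}`, this is the subgroup `R^χ M` generated by the elements
`g•m - χ(g)m`.  The quotient `M_χ = M/R^χM` is `M ⧸ chSub ...`. -/
def chSub (κ : Type*) [CommRing κ] {R : Type*} [CommRing R] {G₀ : Type*} [Group G₀]
    (t : G₀ →* SqCl R) (χ : G₀ →* ℤˣ)
    (M : Type*) [AddCommGroup M] [Module (GRing κ R) M] : Submodule ℤ M :=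
  Submodule.span ℤ
    {x | ∃ (g : G₀) (m : M),
      x = (MonoidAlgebra.of κ (SqCl R) (t g)) • m - ((χ g : ℤ) : ℤ) • m}

/-- The Steinberg ideal `⟨⟨⟨a⟩⟩⟨⟨1-a⟩⟩ : a ∈ W_R⟩` of the group ring. -/
def StRel (κ : Type*) [CommRing κ] (R : Type*) [CommRing R] : Ideal (GRing κ R) :=
  Ideal.span {x | ∃ a : WU R, x = gcc κ ((a : Rˣ)) * gcc κ (WU.usub a)}

/-- The Grothendieck–Witt ring `GW(R) = κ[G_R]/⟨⟨⟨a⟩⟩⟨⟨1-a⟩⟩⟩`. -/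
abbrev GWq (κ : Type*) [CommRing κ] (R : Type*) [CommRing R] : Type _ :=
  GRing κ R ⧸ StRel κ R

/-- The fundamental ideal `I(R)` of the Grothendieck–Witt ring. -/
def IfundGW (κ : Type*) [CommRing κ] (R : Type*) [CommRing R] : Ideal (GWq κ R) :=
  (augId κ R).map (Ideal.Quotient.mk (StRel κ R))

/-- The relations of the classical scissors congruence group `P(R)`:
`[a] - [b] + [b/a] - [(1-a⁻¹)/(1-b⁻¹)] + [(1-a)/(1-b)]`. -/
def PRel (κ : Type*) [CommRing κ] (R : Type*) [CommRing R] : Set (WU R →₀ κ) :=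
  { x | ∃ a b c d e : WU R,
      ((c : Rˣ) : R) * ((a : Rˣ) : R) = ((b : Rˣ) : R) ∧
      ((d : Rˣ) : R) * (1 - (((b : Rˣ)⁻¹ : Rˣ) : R)) = 1 - (((a : Rˣ)⁻¹ : Rˣ) : R) ∧
      ((e : Rˣ) : R) * (1 - ((b : Rˣ) : R)) = 1 - ((a : Rˣ) : R) ∧
      x = Finsupp.single a 1 - Finsupp.single b 1 + Finsupp.single c 1
          - Finsupp.single d 1 + Finsupp.single e 1 }

/-- The scissors congruence group (pre-Bloch group) `P(R)` of Dupont–Sah. -/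
abbrev Pgrp (κ : Type*) [CommRing κ] (R : Type*) [CommRing R] : Type _ :=
  (WU R →₀ κ) ⧸ Submodule.span κ (PRel κ R)

/-- The generator `[a]` of `P(R)`. -/
def pcl (κ : Type*) [CommRing κ] {R : Type*} [CommRing R] (a : WU R) : Pgrp κ R :=
  Submodule.Quotient.mk (Finsupp.single a 1)

/-- The subgroup `K_R` of `P(R)` generated by the elements `{a} = [a] + [a⁻¹]`. -/
def PKsub (κ : Type*) [CommRing κ] (R : Type*) [CommRing R] : Submodule κ (Pgrp κ R) :=
  Submodule.span κ {x | ∃ a : WU R, x = pcl κ a + pcl κ (WU.winv a)}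

/-- `\widetilde{P}(R) := P(R)/K_R`. -/
abbrev Ptld (κ : Type*) [CommRing κ] (R : Type*) [CommRing R] : Type _ :=
  Pgrp κ R ⧸ PKsub κ R

/-- The generator `[a]` of `\widetilde{P}(R)`. -/
def ptcl (κ : Type*) [CommRing κ] {R : Type*} [CommRing R] (a : WU R) : Ptld κ R :=
  Submodule.Quotient.mk (pcl κ a)

/-! ### Trivial action of `1 + m`: the abstract argument -/

/-- The relations available in `M = \widetilde{RP}(B)/L_B`, abstracted from its construction:
`r : B → k` is the reduction map, `g x` is the square class `⟨x⟩` (only its values on units matter)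
and `P x` is the class of `[a]` for any lift `a ∈ W_B` of `x` (only its values at `x ≠ 0, 1`
matter). The field `five` is the five-term relation, in which `⟨a⁻¹ - 1⟩` is written
`⟨a(1 - a)⟩`; `inv` comes from `ψ₁` and `const` from `⟨⟨w⟩⟩C_B`; `big` says that `k` has at least
five elements. -/
structure RedSys (B k S M : Type*) [CommRing B] [Field k] [CommRing S] [AddCommGroup M]
    [Module S M] where
  r : B →+* k
  g : B →* S
  P : k → M
  surj : Function.Surjective r
  unit : ∀ a : B, r a ≠ 0 → ∃ b : B, a * b = 1
  sq : ∀ a : B, r a ≠ 0 → g a * g a = 1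
  five : ∀ a b : B, r a ≠ 0 → r a ≠ 1 → r b ≠ 0 → r b ≠ 1 → r a ≠ r b →
    P (r a) - P (r b) + g a • P (r b / r a)
      - g (a * (1 - a)) • P ((1 - (r a)⁻¹) / (1 - (r b)⁻¹))
      - g (1 - a) • P ((1 - r a) / (1 - r b)) = 0
  inv : ∀ x : k, x ≠ 0 → x ≠ 1 → P x + g (-1) • P x⁻¹ = 0
  const : ∀ (w : B) (x : k), r w = 1 → x ≠ 0 → x ≠ 1 →
    (g w - 1) • (P x + g (-1) • P (1 - x)) = 0
  big : ∀ x y : k, ∃ z : k, z ≠ 0 ∧ z ≠ 1 ∧ z ≠ x ∧ z ≠ y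

namespace RedSys

variable {B k S M : Type*} [CommRing B] [Field k] [CommRing S] [AddCommGroup M] [Module S M]
  (D : RedSys B k S M)

/-- The element `⟨⟨w⟩⟩[x]`. -/
def F (w : B) (x : k) : M := (D.g w - 1) • D.P x

lemma sqs {a : B} (ha : D.r a ≠ 0) (n : M) : D.g a • D.g a • n = n := by
  rw [smul_smul, D.sq a ha, one_smul]

lemma negone_ne : D.r (-1) ≠ 0 := by simp

lemma sqm : D.g (-1) * D.g (-1) = 1 := D.sq _ D.negone_ne

lemma F_inv (w : B) {x : k} (h0 : x ≠ 0) (h1 : x ≠ 1) :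
    D.F w x⁻¹ = -(D.g (-1) • D.F w x) := by
  have h := D.inv x h0 h1
  simp only [F]
  linear_combination (norm := module) (D.g (-1) * (D.g w - 1)) • h - D.sqm • ((D.g w - 1) • D.P x⁻¹)

lemma F_sub {w : B} (hw : D.r w = 1) {x : k} (h0 : x ≠ 0) (h1 : x ≠ 1) :
    D.F w (1 - x) = -(D.g (-1) • D.F w x) := by
  have h := D.const w x hw h0 h1
  simp only [F]
  linear_combination (norm := module) (D.g (-1)) • h - D.sqm • ((D.g w - 1) • D.P (1 - x))

lemma F_five (w : B) {a b : B} (ha0 : D.r a ≠ 0) (ha1 : D.r a ≠ 1) (hb0 : D.r b ≠ 0)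
    (hb1 : D.r b ≠ 1) (hab : D.r a ≠ D.r b) :
    D.F w (D.r a) - D.F w (D.r b) + D.g a • D.F w (D.r b / D.r a)
      - (D.g a * D.g (1 - a)) • D.F w ((1 - (D.r a)⁻¹) / (1 - (D.r b)⁻¹))
      - D.g (1 - a) • D.F w ((1 - D.r a) / (1 - D.r b)) = 0 := by
  have h := D.five a b ha0 ha1 hb0 hb1 hab
  rw [map_mul] at h
  simp only [F]
  linear_combination (norm := module) (D.g w - 1) • h

lemma F_rot {w : B} (hw : D.r w = 1) {x : k} (h0 : x ≠ 0) (h1 : x ≠ 1) :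
    D.F w (1 - x⁻¹)⁻¹ = -(D.g (-1) • D.F w x) := by
  have h2 : 1 - x⁻¹ ≠ 0 := by
    rw [Ne, sub_eq_zero, eq_comm, inv_eq_one]; exact h1
  have h3 : 1 - x⁻¹ ≠ 1 := by simpa using h0
  rw [D.F_inv w h2 h3, D.F_sub hw (inv_ne_zero h0) (by simpa using h1), D.F_inv w h0 h1]
  have := D.sqm
  match_scalars
  grind

/-- `⟨-a⟩` acts trivially on `⟨⟨w⟩⟩[ā]`. After the inversion and reflection rules `F_inv`,
`F_rot`, the five-term relations of the pairs `(a⁻¹, b⁻¹)` and `(a, a/b)` have the same last four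
terms up to a square class, so their difference involves `[ā]` alone. -/
lemma F_neg_self {w : B} (hw : D.r w = 1) {a : B} (ha0 : D.r a ≠ 0) (ha1 : D.r a ≠ 1) :
    D.g (-1) • D.g a • D.F w (D.r a) = D.F w (D.r a) := by
  obtain ⟨y, hy0, hy1, hya, -⟩ := D.big (D.r a) 0
  obtain ⟨b, rfl⟩ := D.surj y
  obtain ⟨i, hi⟩ := D.unit a ha0
  obtain ⟨j, hj⟩ := D.unit b hy0
  have hri : D.r i = (D.r a)⁻¹ := by
    rw [← mul_eq_one_iff_eq_inv₀ ha0, mul_comm, ← map_mul, hi, map_one]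
  have hrj : D.r j = (D.r b)⁻¹ := by
    rw [← mul_eq_one_iff_eq_inv₀ hy0, mul_comm, ← map_mul, hj, map_one]
  have sa := D.sq a ha0
  have sm := D.sqm
  have hgi : D.g i = D.g a := by
    have h1 : D.g a * D.g i = 1 := by rw [← map_mul, hi, map_one]
    linear_combination (-D.g i) * sa + D.g a * h1
  have hg1i : D.g (1 - i) = D.g (-1) * D.g a * D.g (1 - a) := by
    rw [← hgi, ← map_mul, ← map_mul]; congr 1; linear_combination -hi
  have h2 := D.F_five w (a := i) (b := j) (by simp [hri, ha0]) (by simpa [hri] using ha1)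
    (by simp [hrj, hy0]) (by simpa [hrj] using hy1) (by simpa [hri, hrj] using (Ne.symm hya))
  have h3 := D.F_five w (a := a) (b := a * j) ha0 ha1 (by simp [hrj, ha0, hy0])
    (by
      rw [map_mul, hrj, ← div_eq_mul_inv, Ne, div_eq_one_iff_eq hy0]; exact Ne.symm hya)
    (by
      rw [map_mul, hrj, ← div_eq_mul_inv, Ne, eq_div_iff hy0, mul_eq_left₀ ha0]; exact hy1)
  simp only [hri, hrj, hgi, hg1i, map_mul, inv_inv] at h2 h3
  generalize D.r a = A at *
  generalize D.r b = Y at *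
  have nA : 1 - A ≠ 0 := sub_ne_zero.2 (Ne.symm ha1)
  have nY : 1 - Y ≠ 0 := sub_ne_zero.2 (Ne.symm hy1)
  have nY' : Y - 1 ≠ 0 := sub_ne_zero.2 hy1
  have nA' : A - 1 ≠ 0 := sub_ne_zero.2 ha1
  have nAY : A - Y ≠ 0 := sub_ne_zero.2 (Ne.symm hya)
  have nYA : Y - A ≠ 0 := sub_ne_zero.2 hya
  -- the cross-ratios `(1-a)/(1-b)` and `(1-a⁻¹)/(1-b⁻¹)`
  set e := (1 - A) / (1 - Y) with he
  set d := (1 - A⁻¹) / (1 - Y⁻¹) with hd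
  have hde : d = Y * (1 - A) / (A * (1 - Y)) := by
    rw [hd]; field_simp; ring
  have he0 : e ≠ 0 := div_ne_zero nA nY
  have he1 : e ≠ 1 := by rw [he, Ne, div_eq_one_iff_eq nY]; intro h; apply hya; linear_combination h
  have hd0 : d ≠ 0 := by rw [hde]; positivity
  have hd1 : d ≠ 1 := by
    rw [hde, Ne, div_eq_one_iff_eq (by positivity)]; intro h; apply hya; linear_combination h
  have e1 : A * Y⁻¹ = (Y / A)⁻¹ := by field_simp
  have e2 : (Y / A)⁻¹ / A = Y⁻¹ := by field_simp
  have e3 : Y⁻¹ / A⁻¹ = (Y / A)⁻¹ := by field_simp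
  have e4 : (1 - A⁻¹) / (1 - (Y / A)⁻¹⁻¹) = (1 - e⁻¹)⁻¹ := by
    have q1 : 1 - e⁻¹ = (Y - A) / (1 - A) := by
      rw [he, inv_div, eq_div_iff nA, sub_mul, div_mul_cancel₀ _ nA]; ring
    have q2 : 1 - (Y / A)⁻¹⁻¹ = (A - Y) / A := by rw [inv_inv, sub_div, div_self ha0]
    have q3 : 1 - A⁻¹ = (A - 1) / A := by rw [sub_div, div_self ha0, one_div]
    rw [q1, q2, q3, inv_div, div_div_div_cancel_right₀ ha0, div_eq_div_iff nAY nYA]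
    ring
  have e5 : (1 - A) / (1 - (Y / A)⁻¹) = (1 - d⁻¹)⁻¹ := by
    have q0 : Y * (1 - A) ≠ 0 := mul_ne_zero hy0 nA
    have q1 : 1 - d⁻¹ = (Y - A) / (Y * (1 - A)) := by
      rw [hde, inv_div, eq_div_iff q0, sub_mul, div_mul_cancel₀ _ q0]; ring
    have q2 : 1 - (Y / A)⁻¹ = (Y - A) / Y := by rw [inv_div, sub_div, div_self hy0]
    rw [q1, q2, inv_div, div_div_eq_mul_div, mul_comm Y]
  rw [e1, e2, e4, e5, D.F_rot hw he0 he1, D.F_rot hw hd0 hd1, D.F_inv w hy0 hy1,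
    D.F_inv w (x := Y / A) (by positivity) (by rw [Ne, div_eq_one_iff_eq ha0]; exact hya)] at h3
  rw [e3, D.F_inv w ha0 ha1, D.F_inv w hy0 hy1,
    D.F_inv w (x := Y / A) (by positivity) (by rw [Ne, div_eq_one_iff_eq ha0]; exact hya)] at h2
  linear_combination (norm := skip) (D.g a * D.g (-1)) • h3 + D.g (-1) • h2
  match_scalars <;> grind

/-- The group `1 + m` acts trivially on the elements `⟨⟨w⟩⟩[x]`, `w ∈ 1 + m`. -/
lemma F_unip {u w : B} (hu : D.r u = 1) (hw : D.r w = 1) {x : k} (h0 : x ≠ 0) (h1 : x ≠ 1) :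
    D.g u • D.F w x = D.F w x := by
  obtain ⟨a, rfl⟩ := D.surj x
  have e1 := D.F_neg_self hw h0 h1
  have e2 := D.F_neg_self hw (a := a * u) (by simpa [hu] using h0) (by simpa [hu] using h1)
  rw [map_mul, map_mul, hu, mul_one] at e2
  calc D.g u • D.F w (D.r a) = D.g u • (D.g (-1) • D.g a • D.F w (D.r a)) := by rw [e1]
    _ = D.g (-1) • (D.g a * D.g u) • D.F w (D.r a) := by module
    _ = _ := e2

lemma F_add_self {w : B} (hw : D.r w = 1) {x : k} (h0 : x ≠ 0) (h1 : x ≠ 1) :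
    D.F w x + D.F w x = 0 := by
  have e1 := D.F_unip hw hw h0 h1
  have e2 := D.sq w (by simp [hw])
  have e3 : D.g w • D.F w x = - D.F w x := by
    simp only [F]
    linear_combination (norm := module) e2 • D.P x
  rw [e1] at e3
  nth_rewrite 1 [e3]
  simp

lemma F_neg {w : B} (hw : D.r w = 1) {x : k} (h0 : x ≠ 0) (h1 : x ≠ 1) :
    - D.F w x = D.F w x := neg_eq_of_add_eq_zero_left (D.F_add_self hw h0 h1)

lemma F_mul {u w : B} (hu : D.r u = 1) (hw : D.r w = 1) {x : k} (h0 : x ≠ 0) (h1 : x ≠ 1) :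
    D.F (u * w) x = D.F u x + D.F w x := by
  have e1 := D.F_unip hu hw h0 h1
  simp only [F, map_mul] at e1 ⊢
  linear_combination (norm := module) e1

lemma F_congr {w : B} (hw : D.r w = 1) {x : k} (h0 : x ≠ 0) (h1 : x ≠ 1) {a b : B}
    (ha : D.r a ≠ 0) (hab : D.r a = D.r b) : D.g a • D.F w x = D.g b • D.F w x := by
  obtain ⟨i, hi⟩ := D.unit b (hab ▸ ha)
  have hu : D.r (a * i) = 1 := by rw [map_mul, hab, ← map_mul, hi, map_one]
  have e2 := D.F_unip hu hw h0 h1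
  have e3 : a = b * (a * i) := by linear_combination -a * hi
  nth_rewrite 1 [e3]
  rw [map_mul, mul_smul, e2]

lemma F_self {w : B} (hw : D.r w = 1) {a : B} (h0 : D.r a ≠ 0) (h1 : D.r a ≠ 1) :
    D.g a • D.F w (D.r a) = D.g (-1) • D.F w (D.r a) := by
  have e := D.F_neg_self hw h0 h1
  nth_rewrite 2 [← e]
  rw [D.sqs D.negone_ne]

lemma F_self_sub {w : B} (hw : D.r w = 1) {a : B} (h0 : D.r a ≠ 0) (h1 : D.r a ≠ 1) :
    D.g (1 - a) • D.F w (D.r a) = D.g (-1) • D.F w (D.r a) := by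
  have e0 : D.F w (D.r a) = D.g (-1) • D.F w (D.r (1 - a)) := by
    rw [map_sub, map_one, D.F_sub hw h0 h1, smul_neg, D.sqs D.negone_ne, D.F_neg hw h0 h1]
  have e := D.F_self hw (a := 1 - a) (by simpa [sub_eq_zero] using Ne.symm h1) (by simpa using h0)
  rw [e0, smul_comm, e]

lemma inv_lift {a i : B} (h : a * i = 1) : D.r i = (D.r a)⁻¹ ∧ D.g i = D.g a := by
  have h1 : D.r a * D.r i = 1 := by rw [← map_mul, h, map_one]
  have h0 : D.r a ≠ 0 := left_ne_zero_of_mul_eq_one h1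
  refine ⟨(inv_eq_of_mul_eq_one_right h1).symm, ?_⟩
  have h2 : D.g a * D.g i = 1 := by rw [← map_mul, h, map_one]
  linear_combination (-D.g i) * D.sq a h0 + D.g a * h2

/-- The relation obtained by comparing the five-term relations of `(a, b)` and `(a(1 + x), b)`,
whose entries have the same residue classes: modulo `m` one has `c = b/a`, `e = (1-a)/(1-b)`,
hence `ce = (1-a⁻¹)/(1-b⁻¹)`, while `t = a/(1-a)`, so that `1 - a(1+x) = (1-a)(1-xt)`. -/
lemma F_pair {c e t x : B} (hc0 : D.r c ≠ 0) (hc1 : D.r c ≠ 1) (he0 : D.r e ≠ 0)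
    (he1 : D.r e ≠ 1) (hce : D.r c * D.r e ≠ 1) (hx : D.r x = 0)
    (ht : D.r t * (D.r e * (1 - D.r c)) = 1 - D.r e) :
    D.F (1 + x) (D.r c * D.r e) + D.F (1 - x * t) (D.r c * D.r e)
      = D.g e • D.F (1 + x) (D.r c) + D.F (1 - x * t) (D.r e) := by
  have nc : 1 - D.r c ≠ 0 := sub_ne_zero.2 (Ne.symm hc1)
  have ne : 1 - D.r e ≠ 0 := sub_ne_zero.2 (Ne.symm he1)
  have nce : 1 - D.r c * D.r e ≠ 0 := sub_ne_zero.2 (Ne.symm hce)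
  have ht0 : D.r t ≠ 0 := by intro h; rw [h, zero_mul] at ht; exact ne ht.symm
  have hq : D.r (1 + t) * (D.r e * (1 - D.r c)) = 1 - D.r c * D.r e := by
    rw [map_add, map_one]; linear_combination ht
  have hq0 : D.r (1 + t) ≠ 0 := by intro h; rw [h, zero_mul] at hq; exact nce hq.symm
  have hu : D.r (1 + x) = 1 := by simp [hx]
  have hv : D.r (1 - x * t) = 1 := by simp [hx]
  obtain ⟨q, hqi⟩ := D.unit _ hq0
  obtain ⟨hrq, hgq⟩ := D.inv_lift hqi
  -- `a = t/(1+t)` and `1 - a = 1/(1+t)`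
  have ha' : 1 - t * q = q := by linear_combination -hqi
  have hra : D.r (t * q) * (1 - D.r c * D.r e) = 1 - D.r e := by
    rw [map_mul, hrq, ← hq]; field_simp; linear_combination ht
  have ha0 : D.r (t * q) ≠ 0 := by intro h; rw [h, zero_mul] at hra; exact ne hra.symm
  have hrq' : D.r q = 1 - D.r (t * q) := by rw [← map_one D.r, ← map_sub, ha']
  have hq1 : D.r q ≠ 0 := by rw [hrq]; exact inv_ne_zero hq0
  have ha1 : D.r (t * q) ≠ 1 := by
    intro h; rw [h, sub_self] at hrq'; exact hq1 hrq'
  obtain ⟨hb0, hb1, hab⟩ : D.r (t * q * c) ≠ 0 ∧ D.r (t * q * c) ≠ 1 ∧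
      D.r (t * q) ≠ D.r (t * q * c) := by
    rw [map_mul _ (t * q)]
    refine ⟨mul_ne_zero ha0 hc0, ?_, ?_⟩
    · intro h
      apply nc
      linear_combination hra * D.r c - h * (1 - D.r c * D.r e)
    · intro h; apply hc1; exact (mul_right_eq_self₀.1 h.symm).resolve_right ha0
  have h1 := D.five (t * q) (t * q * c) ha0 ha1 hb0 hb1 hab
  have hr' : D.r (t * q * (1 + x)) = D.r (t * q) := by rw [map_mul _ (t * q), hu, mul_one]
  have h2 := D.five (t * q * (1 + x)) (t * q * c) (by rwa [hr']) (by rwa [hr']) hb0 hb1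
    (by rwa [hr'])
  have hs' : 1 - t * q * (1 + x) = q * (1 - x * t) := by linear_combination -hqi
  rw [hr'] at h2
  have c1 : D.r (t * q * c) / D.r (t * q) = D.r c := by
    rw [map_mul _ (t * q), mul_div_cancel_left₀ _ ha0]
  have c3 : (1 - D.r (t * q)) / (1 - D.r (t * q * c)) = D.r e := by
    rw [div_eq_iff (sub_ne_zero.2 (Ne.symm hb1)), map_mul _ (t * q)]
    linear_combination -hra
  have c2 : (1 - (D.r (t * q))⁻¹) / (1 - (D.r (t * q * c))⁻¹) = D.r c * D.r e := by
    have : 1 - (D.r (t * q * c))⁻¹ ≠ 0 := by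
      rw [Ne, sub_eq_zero, eq_comm, inv_eq_one]; exact hb1
    rw [div_eq_iff this, map_mul _ (t * q)]
    field_simp
    linear_combination hra
  rw [c1, c2, c3, ha'] at h1
  rw [c1, c2, c3, hs'] at h2
  simp only [map_mul D.g, hgq] at h1 h2
  have st := D.sq t ht0
  have sq' := D.sq _ hq0
  have key : D.g t • D.F ((1 + x) * (1 - x * t)) (D.r c * D.r e) =
      (D.g t * D.g (1 + t)) • D.F (1 + x) (D.r c) - D.g (1 + t) • D.F (1 - x * t) (D.r e) := by
    simp only [F, map_mul]
    linear_combination (norm := skip) h1 - h2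
    match_scalars <;> grind
  have hce0 : D.r (c * e) ≠ 0 := by simp [hc0, he0]
  have hce1 : D.r (c * e) ≠ 1 := by simpa using hce
  -- the actions of `⟨t⟩` and `⟨1 + t⟩` in terms of `c` and `e`
  have g1 : ∀ {w : B} {y : k}, D.r w = 1 → y ≠ 0 → y ≠ 1 →
      D.g t • D.F w y = (D.g (1 - e) * D.g e * D.g (1 - c)) • D.F w y := by
    intro w y hw h0 h1
    have hh : D.r (t * (e * (1 - c)) ) = D.r (1 - e) := by simpa using ht
    have := D.F_congr hw h0 h1 (by rw [hh]; simpa using ne) hh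
    have s1 := D.sq e he0
    have s2 := D.sq (1 - c) (by simpa using nc)
    rw [map_mul, map_mul] at this
    linear_combination (norm := skip) (D.g e * D.g (1 - c)) • this
    match_scalars
    grind
  have g2 : ∀ {w : B} {y : k}, D.r w = 1 → y ≠ 0 → y ≠ 1 →
      D.g (1 + t) • D.F w y = (D.g (1 - c * e) * D.g e * D.g (1 - c)) • D.F w y := by
    intro w y hw h0 h1
    have hh : D.r ((1 + t) * (e * (1 - c)) ) = D.r (1 - c * e) := by simpa using hq
    have := D.F_congr hw h0 h1 (by rw [hh]; simpa using nce) hh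
    have s1 := D.sq e he0
    have s2 := D.sq (1 - c) (by simpa using nc)
    rw [map_mul, map_mul] at this
    linear_combination (norm := skip) (D.g e * D.g (1 - c)) • this
    match_scalars
    grind
  rw [D.F_mul hu hv (x := D.r c * D.r e) (by simpa using hce0) hce] at key
  have k1 : D.g (1 - c * e) • D.F (1 + x) (D.r c * D.r e) =
    D.g (-1) • D.F (1 + x) (D.r c * D.r e) := by
    have := D.F_self_sub hu hce0 hce1; rwa [map_mul] at this
  have k2 : D.g (1 - c * e) • D.F (1 - x * t) (D.r c * D.r e) =
    D.g (-1) • D.F (1 - x * t) (D.r c * D.r e) := by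
    have := D.F_self_sub hv hce0 hce1; rwa [map_mul] at this
  have k3 := D.F_self_sub hu hc0 hc1
  have k4 := D.F_self_sub hv he0 he1
  have k6 := D.F_neg hv he0 he1
  rw [smul_add, g1 hu (by simpa using hce0) hce, g1 hv (by simpa using hce0) hce,
    mul_smul _ _ (D.F (1 + x) (D.r c)), g2 hu hc0 hc1, smul_comm, g1 hu hc0 hc1,
    g2 hv he0 he1] at key
  have s1 := D.sq e he0
  have s2 := D.sq (1 - c) (by simpa using nc)
  have s3 := D.sq (1 - e) (by simpa using ne)
  have s4 := D.sq (1 - c * e) (by simpa using nce)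
  have s5 := D.sqm
  generalize D.F (1 + x) (D.r c * D.r e) = α1 at *
  generalize D.F (1 - x * t) (D.r c * D.r e) = α2 at *
  generalize D.F (1 + x) (D.r c) = β at *
  generalize D.F (1 - x * t) (D.r e) = δ at *
  linear_combination (norm := skip)
    (D.g e * D.g (-1) * D.g (1 - c * e) * D.g (1 - c) * D.g (1 - e)) • key
      - D.g (-1) • (k1 + k2) + (D.g (-1) * D.g e) • k3 - D.g (-1) • k4 + k6
  match_scalars <;> grind


/-- If `⟨⟨w⟩⟩[x]` does not depend on `x` then it vanishes: the units occurring in a five-term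
relation act trivially on the common value `n`, and the relation reads `-n = 0`. -/
lemma eq_zero_of_const {w : B} (hw : D.r w = 1) {n : M}
    (h : ∀ x : k, x ≠ 0 → x ≠ 1 → D.F w x = n) : n = 0 := by
  obtain ⟨x, hx0, hx1, -, -⟩ := D.big 0 0
  obtain ⟨y, hy0, hy1, hyx, -⟩ := D.big x 0
  have hneg : -n = n := by rw [← h x hx0 hx1]; exact D.F_neg hw hx0 hx1
  have hm : D.g (-1) • n = n := by
    have e := D.F_inv w hx0 hx1
    rw [h _ (inv_ne_zero hx0) (by simpa using hx1), h x hx0 hx1, ← smul_neg, hneg] at e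
    exact e.symm
  have ht : ∀ a : B, D.r a ≠ 0 → D.r a ≠ 1 → D.g a • n = n := by
    intro a h0 h1
    have e := D.F_self hw h0 h1
    rwa [h _ h0 h1, hm] at e
  obtain ⟨a, rfl⟩ := D.surj x
  obtain ⟨b, rfl⟩ := D.surj y
  have e := D.F_five w hx0 hx1 hy0 hy1 (Ne.symm hyx)
  have ia : 1 - (D.r a)⁻¹ ≠ 0 := by rw [Ne, sub_eq_zero, eq_comm, inv_eq_one]; exact hx1
  have ib : 1 - (D.r b)⁻¹ ≠ 0 := by rw [Ne, sub_eq_zero, eq_comm, inv_eq_one]; exact hy1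
  have na : 1 - D.r a ≠ 0 := sub_ne_zero.2 (Ne.symm hx1)
  have nb : 1 - D.r b ≠ 0 := sub_ne_zero.2 (Ne.symm hy1)
  rw [h _ hx0 hx1, h _ hy0 hy1, h (D.r b / D.r a) (div_ne_zero hy0 hx0)
      (by rwa [Ne, div_eq_one_iff_eq hx0]),
    h _ (div_ne_zero ia ib) (by
      rw [Ne, div_eq_one_iff_eq ib, sub_right_inj, inv_inj]; exact Ne.symm hyx),
    h _ (div_ne_zero na nb) (by
      rw [Ne, div_eq_one_iff_eq nb, sub_right_inj]; exact Ne.symm hyx),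
    mul_smul, ht (1 - a) (by simpa using na) (by simpa using hx0), ht a hx0 hx1] at e
  rw [← neg_eq_zero]
  linear_combination (norm := module) e

/-- Products of two elements of `m` contribute nothing: varying the lift `t` in `F_pair` shows
that `⟨⟨1 + xy⟩⟩[z]` is independent of `z`. -/
lemma F_prod {x y : B} (hx : D.r x = 0) (hy : D.r y = 0) {z : k} (h0 : z ≠ 0) (h1 : z ≠ 1) :
    D.F (1 + x * y) z = 0 := by
  have hxy : D.r (1 + x * y) = 1 := by simp [hx]
  refine D.eq_zero_of_const hxy (fun Y hY0 hY1 => ?_)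
  rcases eq_or_ne Y z with rfl | hne
  · rfl
  obtain ⟨e, rfl⟩ := D.surj z
  obtain ⟨c, hc⟩ := D.surj (Y / D.r e)
  obtain ⟨t, ht⟩ := D.surj ((1 - D.r e) / (D.r e * (1 - D.r c)))
  have hc0 : D.r c ≠ 0 := by rw [hc]; exact div_ne_zero hY0 h0
  have hc1 : D.r c ≠ 1 := by rwa [hc, Ne, div_eq_one_iff_eq h0]
  have hce : D.r c * D.r e = Y := by rw [hc, div_mul_cancel₀ _ h0]
  have ht' : D.r t * (D.r e * (1 - D.r c)) = 1 - D.r e := by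
    rw [ht, div_mul_cancel₀]
    exact mul_ne_zero h0 (sub_ne_zero.2 (Ne.symm hc1))
  have p1 := D.F_pair hc0 hc1 h0 h1 (by rwa [hce]) hx ht'
  have p2 := D.F_pair (t := t - y * (1 - x * t)) hc0 hc1 h0 h1 (by rwa [hce]) hx
    (by rw [map_sub, map_mul, hy, zero_mul, sub_zero]; exact ht')
  have hs : 1 - x * (t - y * (1 - x * t)) = (1 - x * t) * (1 + x * y) := by ring
  have hv : D.r (1 - x * t) = 1 := by simp [hx]
  rw [hs, D.F_mul hv hxy h0 h1, hce, D.F_mul hv hxy hY0 hY1] at p2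
  rw [hce] at p1
  linear_combination (norm := module) p2 - p1

/-- By `F_prod` the map `x ↦ ⟨⟨1 + x⟩⟩[z]` turns addition on `m` into addition. -/
lemma F_add {x y : B} (hx : D.r x = 0) (hy : D.r y = 0) {z : k} (h0 : z ≠ 0) (h1 : z ≠ 1) :
    D.F (1 + (x + y)) z = D.F (1 + x) z + D.F (1 + y) z := by
  have hxy : D.r (1 + (x + y)) = 1 := by simp [hx, hy]
  obtain ⟨i, hi⟩ := D.unit (1 + (x + y)) (by simp [hxy])
  have hs : (1 + x) * (1 + y) = (1 + (x + y)) * (1 + x * (y * i)) := by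
    linear_combination -(x * y) * hi
  have e := D.F_mul (u := 1 + x) (w := 1 + y) (by simp [hx]) (by simp [hy]) h0 h1
  rw [hs, D.F_mul hxy (by simp [hx]) h0 h1, D.F_prod hx (by simp [hy]) h0 h1, add_zero] at e
  exact e

lemma F_one (z : k) : D.F 1 z = 0 := by simp [F]

lemma F_one_sub {x : B} (hx : D.r x = 0) {z : k} (h0 : z ≠ 0) (h1 : z ≠ 1) :
    D.F (1 - x) z = D.F (1 + x) z := by
  have e := D.F_add (x := x) (y := -x) hx (by simp [hx]) h0 h1
  rw [add_neg_cancel, add_zero, F_one, ← sub_eq_add_neg] at e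
  rw [← D.F_neg (w := 1 + x) (by simp [hx]) h0 h1]
  exact (neg_eq_of_add_eq_zero_right e.symm).symm

lemma F_pair' {c e t x : B} (hc0 : D.r c ≠ 0) (hc1 : D.r c ≠ 1) (he0 : D.r e ≠ 0)
    (he1 : D.r e ≠ 1) (hce : D.r c * D.r e ≠ 1) (hx : D.r x = 0)
    (ht : D.r t * (D.r e * (1 - D.r c)) = 1 - D.r e) :
    D.F (1 + x) (D.r c * D.r e) + D.F (1 + x * t) (D.r c * D.r e)
      = D.g e • D.F (1 + x) (D.r c) + D.F (1 + x * t) (D.r e) := by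
  have h := D.F_pair hc0 hc1 he0 he1 hce hx ht
  rwa [D.F_one_sub (by simp [hx]) (mul_ne_zero hc0 he0) hce,
    D.F_one_sub (by simp [hx]) he0 he1] at h

/-- Apply `⟨ce⟩` to `F_pair'` and use that `⟨-z⟩` fixes `⟨⟨w⟩⟩[z]`. -/
lemma F_half {c e t x : B} (hc0 : D.r c ≠ 0) (hc1 : D.r c ≠ 1) (he0 : D.r e ≠ 0)
    (he1 : D.r e ≠ 1) (hce : D.r c * D.r e ≠ 1) (hx : D.r x = 0)
    (ht : D.r t * (D.r e * (1 - D.r c)) = 1 - D.r e) :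
    (D.g e - 1) • D.F (1 + x) (D.r c) = (D.g c - 1) • D.F (1 + x * t) (D.r e) := by
  have h := D.F_pair' hc0 hc1 he0 he1 hce hx ht
  have hu : D.r (1 + x) = 1 := by simp [hx]
  have hv : D.r (1 + x * t) = 1 := by simp [hx]
  have k1 := D.F_self hu (a := c * e) (by simp [hc0, he0]) (by simpa using hce)
  have k2 := D.F_self hv (a := c * e) (by simp [hc0, he0]) (by simpa using hce)
  have k3 := D.F_self hu hc0 hc1
  have k4 := D.F_self hv he0 he1
  have s1 := D.sq e he0
  have s5 := D.sqm
  rw [map_mul, map_mul] at k1 k2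
  generalize D.F (1 + x) (D.r c * D.r e) = α1 at *
  generalize D.F (1 + x * t) (D.r c * D.r e) = α2 at *
  generalize D.F (1 + x) (D.r c) = β at *
  generalize D.F (1 + x * t) (D.r e) = δ at *
  linear_combination (norm := skip)
    -(1 - D.g (-1) * D.g c * D.g e) • h - D.g (-1) • (k1 + k2) + D.g (-1) • k3
      + (D.g (-1) * D.g c) • k4
  match_scalars <;> grind

/-- Applying `F_half` twice, with `c` and `e` exchanged the second time, replaces `x` by `xts`
with `ts ≡ 1/(ce)`. Since `1 - ts` is a unit, every `y ∈ m` has the form `x - xts`. -/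
lemma F_triv_aux {c e y : B} (hc0 : D.r c ≠ 0) (hc1 : D.r c ≠ 1) (he0 : D.r e ≠ 0)
    (he1 : D.r e ≠ 1) (hce : D.r c * D.r e ≠ 1) (hy : D.r y = 0) :
    D.g e • D.F (1 + y) (D.r c) = D.F (1 + y) (D.r c) := by
  have nc : 1 - D.r c ≠ 0 := sub_ne_zero.2 (Ne.symm hc1)
  have ne : 1 - D.r e ≠ 0 := sub_ne_zero.2 (Ne.symm he1)
  obtain ⟨t, ht⟩ := D.surj ((1 - D.r e) / (D.r e * (1 - D.r c)))
  obtain ⟨s, hs⟩ := D.surj ((1 - D.r c) / (D.r c * (1 - D.r e)))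
  have ht' : D.r t * (D.r e * (1 - D.r c)) = 1 - D.r e := by
    rw [ht, div_mul_cancel₀]; exact mul_ne_zero he0 nc
  have hs' : D.r s * (D.r c * (1 - D.r e)) = 1 - D.r c := by
    rw [hs, div_mul_cancel₀]; exact mul_ne_zero hc0 ne
  have hts : D.r t * D.r s * (D.r c * D.r e) = 1 := by
    rw [ht, hs]; field_simp
  obtain ⟨i, hi⟩ := D.unit (1 - t * s) (by
    rw [map_sub, map_one, map_mul, sub_ne_zero]
    intro h; apply hce; rw [← h, one_mul] at hts; rw [hts, h])
  have hx : D.r (y * i) = 0 := by simp [hy]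
  have p1 := D.F_half hc0 hc1 he0 he1 hce hx ht'
  have p2 := D.F_half (c := e) (e := c) (x := y * i * t) he0 he1 hc0 hc1
    (by rwa [mul_comm]) (by simp [hy]) hs'
  have hsplit : y * i = y + y * i * t * s := by linear_combination y * hi
  have p3 := D.F_add (x := y) (y := y * i * t * s) hy (by simp [hy]) hc0 hc1
  rw [← hsplit] at p3
  rw [p2, p3] at p1
  linear_combination (norm := module) p1

/-- Square classes of units act trivially on the elements `⟨⟨1 + y⟩⟩[z]`. -/
lemma F_triv {a y : B} (ha : D.r a ≠ 0) (hy : D.r y = 0) {z : k} (h0 : z ≠ 0) (h1 : z ≠ 1) :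
    D.g a • D.F (1 + y) z = D.F (1 + y) z := by
  obtain ⟨c, rfl⟩ := D.surj z
  have hw : D.r (1 + y) = 1 := by simp [hy]
  by_cases ha1 : D.r a = 1
  · exact D.F_unip ha1 hw h0 h1
  by_cases hca : D.r c * D.r a = 1
  · -- factor the residue class of `a = 1/c` as `z · 1/(cz)`
    obtain ⟨z, hz0, hz1, hza, -⟩ := D.big (D.r a) 0
    obtain ⟨e₁, rfl⟩ := D.surj z
    obtain ⟨e₂, he₂⟩ := D.surj (D.r a / D.r e₁)
    have q : D.r a = D.r (e₁ * e₂) := by rw [map_mul, he₂, mul_div_cancel₀ _ hz0]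
    rw [D.F_congr hw h0 h1 ha q, map_mul, mul_smul,
      D.F_triv_aux h0 h1 (by rw [he₂]; exact div_ne_zero ha hz0)
        (by rw [he₂, Ne, div_eq_one_iff_eq hz0]; exact Ne.symm hza)
        (by rw [he₂, ← mul_div_assoc, hca, one_div, Ne, inv_eq_one]; exact hz1) hy,
      D.F_triv_aux h0 h1 hz0 hz1 (by
        intro h; apply hza; exact mul_left_cancel₀ h0 (h.trans hca.symm)) hy]
  · exact D.F_triv_aux h0 h1 ha ha1 hca hy

/-- `F_pair'` after clearing the denominator of `t`, with the trivial action of `⟨e⟩`. -/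
lemma F_half_sum {c e x : B} (hc0 : D.r c ≠ 0) (hc1 : D.r c ≠ 1) (he0 : D.r e ≠ 0)
    (he1 : D.r e ≠ 1) (hce : D.r c * D.r e ≠ 1) (hx : D.r x = 0) :
    D.F (1 + x * (1 - c * e)) (D.r c * D.r e) =
      D.F (1 + x * (e * (1 - c))) (D.r c) + D.F (1 + x * (1 - e)) (D.r e) := by
  have nc : 1 - D.r c ≠ 0 := sub_ne_zero.2 (Ne.symm hc1)
  obtain ⟨i, hi⟩ := D.unit (e * (1 - c)) (by simp [he0, nc])
  have hri : D.r i * (D.r e * (1 - D.r c)) = 1 := by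
    have := congrArg D.r hi
    simp only [map_mul, map_sub, map_one] at this
    rw [mul_comm]; exact this
  have p := D.F_pair' (x := x * (e * (1 - c))) (t := (1 - e) * i) hc0 hc1 he0 he1 hce
    (by simp [hx]) (by
      rw [map_mul, mul_assoc, hri, map_sub, map_one, mul_one])
  have q : x * (e * (1 - c)) * ((1 - e) * i) = x * (1 - e) := by
    linear_combination x * (1 - e) * hi
  have q2 : x * (1 - c * e) = x * (e * (1 - c)) + x * (1 - e) := by ring
  rw [q, D.F_triv he0 (by simp [hx]) hc0 hc1, ← D.F_add (by simp [hx]) (by simp [hx])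
    (mul_ne_zero hc0 he0) hce, ← q2] at p
  exact p

/-- The left-hand side of `F_half_sum` is symmetric in `c` and `e`. -/
lemma F_symm {c e y : B} (hc0 : D.r c ≠ 0) (hc1 : D.r c ≠ 1) (he0 : D.r e ≠ 0)
    (he1 : D.r e ≠ 1) (hce : D.r c * D.r e ≠ 1) (hy : D.r y = 0) :
    D.F (1 + y) (D.r c) = D.F (1 + y) (D.r e) := by
  have nc : 1 - D.r c ≠ 0 := sub_ne_zero.2 (Ne.symm hc1)
  have ne : 1 - D.r e ≠ 0 := sub_ne_zero.2 (Ne.symm he1)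
  obtain ⟨i, hi⟩ := D.unit ((1 - c) * (1 - e)) (by simp [nc, ne])
  have hx : D.r (y * i) = 0 := by simp [hy]
  have p1 := D.F_half_sum hc0 hc1 he0 he1 hce hx
  have p2 := D.F_half_sum he0 he1 hc0 hc1 (by rwa [mul_comm]) hx
  rw [mul_comm (D.r e), mul_comm e c, p1] at p2
  have q1 : y * i * (1 - c) = y + y * i * (e * (1 - c)) := by linear_combination y * hi
  have q2 : y * i * (1 - e) = y + y * i * (c * (1 - e)) := by linear_combination y * hi
  have r1 := D.F_add (x := y) (y := y * i * (e * (1 - c))) hy (by simp [hy]) hc0 hc1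
  have r2 := D.F_add (x := y) (y := y * i * (c * (1 - e))) hy (by simp [hy]) he0 he1
  rw [← q1] at r1
  rw [← q2] at r2
  linear_combination (norm := module) -p2 - r1 + r2

/-- The group `1 + m` acts trivially on the classes `[x]`. -/
theorem F_eq_zero {w : B} (hw : D.r w = 1) {x : k} (h0 : x ≠ 0) (h1 : x ≠ 1) : D.F w x = 0 := by
  have hy : D.r (w - 1) = 0 := by rw [map_sub, hw, map_one, sub_self]
  have hwy : w = 1 + (w - 1) := by ring
  refine D.eq_zero_of_const hw (fun X hX0 hX1 => ?_)
  obtain ⟨z, hz0, hz1, hzx, hzX⟩ := D.big x⁻¹ X⁻¹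
  obtain ⟨a, rfl⟩ := D.surj x
  obtain ⟨b, rfl⟩ := D.surj X
  obtain ⟨c, rfl⟩ := D.surj z
  rw [hwy, D.F_symm hX0 hX1 hz0 hz1 (by
      intro h; exact hzX (eq_inv_of_mul_eq_one_right h)) hy,
    D.F_symm h0 h1 hz0 hz1 (by intro h; exact hzx (eq_inv_of_mul_eq_one_right h)) hy]

end RedSys

/-! ### Square classes and generators of `\widetilde{RP}` -/

lemma gcl_mul (κ : Type*) [CommRing κ] {R : Type*} [CommRing R] (u v : Rˣ) :
    gcl κ (u * v) = gcl κ u * gcl κ v := by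
  unfold gcl
  rw [← map_mul]
  rfl

lemma gcl_one (κ : Type*) [CommRing κ] {R : Type*} [CommRing R] :
    gcl κ (1 : Rˣ) = 1 := map_one (MonoidAlgebra.of κ (SqCl R))

lemma gcl_sq (κ : Type*) [CommRing κ] {R : Type*} [CommRing R] (u : Rˣ) :
    gcl κ u * gcl κ u = 1 := by
  rw [← gcl_mul, ← gcl_one]
  unfold gcl
  congr 1
  exact (QuotientGroup.eq_one_iff _).2 ⟨u, by simp [powMonoidHom, sq]⟩

lemma gcl_inv (κ : Type*) [CommRing κ] {R : Type*} [CommRing R] (u : Rˣ) :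
    gcl κ u⁻¹ = gcl κ u := by
  have h1 : gcl κ u * gcl κ u⁻¹ = 1 := by rw [← gcl_mul, mul_inv_cancel, gcl_one]
  linear_combination -gcl κ u⁻¹ * gcl_sq κ u + gcl κ u * h1

lemma gcl_uinvsub (κ : Type*) [CommRing κ] {R : Type*} [CommRing R] (a : WU R) :
    gcl κ (WU.uinvsub a) = gcl κ (a : Rˣ) * gcl κ (WU.usub a) := by
  rw [WU.uinvsub, gcl_mul, gcl_inv]

lemma exists_gcl {R : Type*} [CommRing R] (g : SqCl R) :
    ∃ u : Rˣ, MonoidAlgebra.of ℤ (SqCl R) g = gcl ℤ u := by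
  obtain ⟨u, rfl⟩ := QuotientGroup.mk_surjective g
  exact ⟨u, rfl⟩

lemma rpt_smul (κ : Type*) [CommRing κ] {R : Type*} [CommRing R] (c : GRing κ R) (a : WU R) :
    c • rpt κ a = Submodule.Quotient.mk (c • rp κ a) := rfl

lemma mem_of_gcl_smul {R : Type*} [CommRing R] {M : Type*} [AddCommGroup M] [Module (GRing ℤ R) M]
    (T : AddSubgroup M) (x : M) (h : ∀ w : Rˣ, gcl ℤ w • x ∈ T) (c : GRing ℤ R) : c • x ∈ T := by
  induction c using MonoidAlgebra.induction_on with
  | of g => obtain ⟨u, hu⟩ := exists_gcl g; rw [hu]; exact h u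
  | add f g hf hg => rw [add_smul]; exact T.add_mem hf hg
  | smul n f hf => rw [smul_assoc]; exact T.zsmul_mem hf n

/-- `\widetilde{RP}(R)` is generated as an abelian group by the elements `⟨w⟩[a]`. -/
lemma mem_of_gcl_smul_rpt {R : Type*} [CommRing R] (T : AddSubgroup (RPt ℤ R))
    (h : ∀ (w : Rˣ) (a : WU R), gcl ℤ w • rpt ℤ a ∈ T) (x : RPt ℤ R) : x ∈ T := by
  obtain ⟨y, rfl⟩ := Submodule.Quotient.mk_surjective _ x
  obtain ⟨f, rfl⟩ := Submodule.Quotient.mk_surjective _ y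
  induction f using Finsupp.induction_linear with
  | zero => exact T.zero_mem
  | add f g hf hg => exact T.add_mem hf hg
  | single a c =>
    have : (Finsupp.single a c : preRP ℤ R) = c • pregen ℤ a := by
      simp [pregen]
    rw [this]
    exact mem_of_gcl_smul T (rpt ℤ a) (fun w => h w a) c

/-- The five-term relation in `\widetilde{RP}(R)`. -/
lemma rpt_five {R : Type*} [CommRing R] {a b c d e : WU R}
    (hc : ((c : Rˣ) : R) * ((a : Rˣ) : R) = ((b : Rˣ) : R))
    (hd : ((d : Rˣ) : R) * (1 - (((b : Rˣ)⁻¹ : Rˣ) : R)) = 1 - (((a : Rˣ)⁻¹ : Rˣ) : R))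
    (he : ((e : Rˣ) : R) * (1 - ((b : Rˣ) : R)) = 1 - ((a : Rˣ) : R)) :
    rpt ℤ a - rpt ℤ b + gcl ℤ (a : Rˣ) • rpt ℤ c
      - (gcl ℤ (a : Rˣ) * gcl ℤ (WU.usub a)) • rpt ℤ d - gcl ℤ (WU.usub a) • rpt ℤ e = 0 := by
  rw [← gcl_uinvsub]
  have h : (Submodule.Quotient.mk (pregen ℤ a - pregen ℤ b + gcl ℤ (a : Rˣ) • pregen ℤ c
          - gcl ℤ (WU.uinvsub a) • pregen ℤ d - gcl ℤ (WU.usub a) • pregen ℤ e) : RP ℤ R) = 0 :=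
    (Submodule.Quotient.mk_eq_zero _).2 (Submodule.subset_span ⟨a, b, c, d, e, hc, hd, he, rfl⟩)
  exact congrArg (Submodule.Quotient.mk (p := Kpsi ℤ R)) h

lemma rpt_inv {R : Type*} [CommRing R] (a : WU R) :
    rpt ℤ a + gcl ℤ (-1 : Rˣ) • rpt ℤ (WU.winv a) = 0 :=
  (Submodule.Quotient.mk_eq_zero (Kpsi ℤ R)).2 (Submodule.subset_span ⟨a, rfl⟩)

/-- The universal property of `\widetilde{RP}(R)`. -/
lemma exists_rpt_lift {R : Type*} [CommRing R] {M : Type*} [AddCommGroup M]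
    [Module (GRing ℤ R) M] (p : WU R → M)
    (hfive : ∀ a b c d e : WU R, ((c : Rˣ) : R) * ((a : Rˣ) : R) = ((b : Rˣ) : R) →
      ((d : Rˣ) : R) * (1 - (((b : Rˣ)⁻¹ : Rˣ) : R)) = 1 - (((a : Rˣ)⁻¹ : Rˣ) : R) →
      ((e : Rˣ) : R) * (1 - ((b : Rˣ) : R)) = 1 - ((a : Rˣ) : R) →
      p a - p b + gcl ℤ (a : Rˣ) • p c
        - gcl ℤ (WU.uinvsub a) • p d - gcl ℤ (WU.usub a) • p e = 0)
    (hinv : ∀ a : WU R, p a + gcl ℤ (-1 : Rˣ) • p (WU.winv a) = 0) :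
    ∃ θ : RPt ℤ R →ₗ[GRing ℤ R] M, ∀ a, θ (rpt ℤ a) = p a := by
  have h1 : RPsub ℤ R ≤ LinearMap.ker (Finsupp.linearCombination (GRing ℤ R) p) := by
    rw [RPsub, Submodule.span_le]
    rintro x ⟨a, b, c, d, e, hc, hd, he, rfl⟩
    have := hfive a b c d e hc hd he
    simpa [pregen] using this
  have hgen : ∀ a, (RPsub ℤ R).liftQ _ h1 (rp ℤ a) = p a := by
    intro a
    simp [rp, pregen]
  have h2 : Kpsi ℤ R ≤ LinearMap.ker ((RPsub ℤ R).liftQ _ h1) := by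
    rw [Kpsi, Submodule.span_le]
    rintro x ⟨a, rfl⟩
    rw [SetLike.mem_coe, LinearMap.mem_ker, psiOne, map_add, map_smul, hgen, hgen]
    exact hinv a
  exact ⟨(Kpsi ℤ R).liftQ _ h2, hgen⟩

/-! ### The quotient `\widetilde{RP}(B)/L_B` -/

section LocalRing

open IsLocalRing

variable {B : Type*} [CommRing B] [IsLocalRing B]

lemma isUnit_of_residue {x : B} (h : residue B x ≠ 0) : IsUnit x :=
  residue_ne_zero_iff_isUnit x |>.1 h

lemma residue_unit_ne (u : Bˣ) : residue B (u : B) ≠ 0 :=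
  residue_ne_zero_iff_isUnit _ |>.2 u.isUnit

lemma exists_WU {x : B} (h0 : residue B x ≠ 0) (h1 : residue B x ≠ 1) :
    ∃ a : WU B, ((a : Bˣ) : B) = x :=
  ⟨⟨(isUnit_of_residue h0).unit, isUnit_of_residue (by
    rw [IsUnit.unit_spec, map_sub, map_one, sub_ne_zero]; exact Ne.symm h1)⟩, rfl⟩

lemma WU.residue_ne_one (a : WU B) : residue B ((a : Bˣ) : B) ≠ 1 := by
  have h := residue_unit_ne (WU.usub a)
  rw [WU.usub_coe, map_sub, map_one, sub_ne_zero] at h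
  exact Ne.symm h

open Classical in
/-- The square class `⟨x⟩` of `x ∈ B` in the group ring, extended by `0` to nonunits so as to be
multiplicative on all of `B`. -/
def gHom (B : Type*) [CommRing B] : B →* GRing ℤ B where
  toFun x := if h : IsUnit x then gcl ℤ h.unit else 0
  map_one' := by
    rw [dif_pos isUnit_one, ← gcl_one]
    congr 1
    ext; rfl
  map_mul' x y := by
    by_cases hx : IsUnit x
    · by_cases hy : IsUnit y
      · rw [dif_pos hx, dif_pos hy, dif_pos (hx.mul hy), ← gcl_mul]
        congr 1
        ext; rfl
      · rw [dif_neg hy, dif_neg (fun h => hy (isUnit_of_mul_isUnit_right h)), mul_zero]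
    · rw [dif_neg hx, dif_neg (fun h => hx (isUnit_of_mul_isUnit_left h)), zero_mul]

lemma gHom_unit {B : Type*} [CommRing B] (u : Bˣ) : gHom B (u : B) = gcl ℤ u := by
  refine (dif_pos u.isUnit).trans ?_
  congr 1
  ext; rfl

variable (LB : Submodule (GRing ℤ B) (RPt ℤ B))

/-- The class of `[a]` in `\widetilde{RP}(B)/L_B`. -/
def cls (a : WU B) : RPt ℤ B ⧸ LB := Submodule.Quotient.mk (rpt ℤ a)

open Classical in
/-- The class in `\widetilde{RP}(B)/L_B` of `[a]` for a lift `a ∈ W_B` of `x`; it is `0` for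
`x = 0, 1`, which have no such lift. -/
def clsP (x : ResidueField B) : RPt ℤ B ⧸ LB :=
  if h : ∃ a : WU B, residue B ((a : Bˣ) : B) = x then cls LB h.choose else 0

lemma clsP_residue
    (hA : ∀ a a' : WU B, residue B ((a : Bˣ) : B) = residue B ((a' : Bˣ) : B) →
      cls LB a = cls LB a') (a : WU B) :
    clsP LB (residue B ((a : Bˣ) : B)) = cls LB a := by
  have h : ∃ a' : WU B, residue B ((a' : Bˣ) : B) = residue B ((a : Bˣ) : B) := ⟨a, rfl⟩
  rw [clsP, dif_pos h]
  exact hA _ _ h.choose_spec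

/-- The `RedSys` structure on `\widetilde{RP}(B)/L_B`. -/
def redSys (hbig : ∀ x y : ResidueField B, ∃ z : ResidueField B, z ≠ 0 ∧ z ≠ 1 ∧ z ≠ x ∧ z ≠ y)
    (hA : ∀ a a' : WU B, residue B ((a : Bˣ) : B) = residue B ((a' : Bˣ) : B) →
      cls LB a = cls LB a')
    (hC : ∀ (u : Bˣ) (a : WU B), residue B (u : B) = 1 →
      (gcl ℤ u - 1) • (cls LB a + gcl ℤ (-1 : Bˣ) • cls LB (WU.oneSub a)) = 0) :
    RedSys B (ResidueField B) (GRing ℤ B) (RPt ℤ B ⧸ LB) where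
  r := residue B
  g := gHom B
  P := clsP LB
  surj := residue_surjective
  unit a ha := (isUnit_of_residue ha).exists_right_inv
  sq a ha := by
    obtain ⟨u, rfl⟩ := isUnit_of_residue ha
    rw [gHom_unit, gcl_sq]
  five := by
    intro a b ha0 ha1 hb0 hb1 hab
    obtain ⟨a, rfl⟩ := exists_WU ha0 ha1
    obtain ⟨b, rfl⟩ := exists_WU hb0 hb1
    have ia : residue B (((a : Bˣ)⁻¹ : Bˣ) : B) = (residue B ((a : Bˣ) : B))⁻¹ :=
      map_units_inv _ _
    have ib : residue B (((b : Bˣ)⁻¹ : Bˣ) : B) = (residue B ((b : Bˣ) : B))⁻¹ :=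
      map_units_inv _ _
    have isb : residue B (((WU.usub b)⁻¹ : Bˣ) : B) = (1 - residue B ((b : Bˣ) : B))⁻¹ := by
      rw [map_units_inv, WU.usub_coe, map_sub, map_one]
    have na : 1 - residue B ((a : Bˣ) : B) ≠ 0 := sub_ne_zero.2 (Ne.symm ha1)
    have nb : 1 - residue B ((b : Bˣ) : B) ≠ 0 := sub_ne_zero.2 (Ne.symm hb1)
    have nb' : residue B ((b : Bˣ) : B) - 1 ≠ 0 := sub_ne_zero.2 hb1
    have nia : 1 - (residue B ((a : Bˣ) : B))⁻¹ ≠ 0 := by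
      rw [Ne, sub_eq_zero, eq_comm, inv_eq_one]; exact ha1
    have nib : 1 - (residue B ((b : Bˣ) : B))⁻¹ ≠ 0 := by
      rw [Ne, sub_eq_zero, eq_comm, inv_eq_one]; exact hb1
    -- the three cross-ratios, lifted to `W_B`
    have hc : residue B ((b : Bˣ) * (((a : Bˣ)⁻¹ : Bˣ) : B)) =
        residue B ((b : Bˣ) : B) / residue B ((a : Bˣ) : B) := by
      rw [map_mul, ia, div_eq_mul_inv]
    have he : residue B ((1 - (a : Bˣ)) * (((WU.usub b)⁻¹ : Bˣ) : B)) =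
        (1 - residue B ((a : Bˣ) : B)) / (1 - residue B ((b : Bˣ) : B)) := by
      rw [map_mul, isb, div_eq_mul_inv, map_sub, map_one]
    have hd : residue B ((b : Bˣ) * (((a : Bˣ)⁻¹ : Bˣ) : B) *
        ((1 - (a : Bˣ)) * (((WU.usub b)⁻¹ : Bˣ) : B))) =
        (1 - (residue B ((a : Bˣ) : B))⁻¹) / (1 - (residue B ((b : Bˣ) : B))⁻¹) := by
      rw [map_mul, hc, he, eq_div_iff nib]
      field_simp
      ring
    obtain ⟨c, hcc⟩ := exists_WU (by rw [hc]; exact div_ne_zero hb0 ha0)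
      (by rw [hc, Ne, div_eq_one_iff_eq ha0]; exact Ne.symm hab)
    obtain ⟨e, hee⟩ := exists_WU (by rw [he]; exact div_ne_zero na nb)
      (by rw [he, Ne, div_eq_one_iff_eq nb, sub_right_inj]; exact hab)
    obtain ⟨d, hdd⟩ := exists_WU (by rw [hd]; exact div_ne_zero nia nib)
      (by rw [hd, Ne, div_eq_one_iff_eq nib, sub_right_inj, inv_inj]; exact hab)
    rw [← hc, ← hd, ← he, ← hdd, ← hcc, ← hee, map_mul, ← WU.usub_coe, gHom_unit, gHom_unit]
    simp only [clsP_residue LB hA]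
    have h1 := Units.mul_inv (a : Bˣ)
    have h2 := Units.mul_inv (b : Bˣ)
    have h3 := Units.mul_inv (WU.usub b)
    rw [WU.usub_coe] at h3
    have := rpt_five (a := a) (b := b) (c := c) (d := d) (e := e)
      (by rw [hcc]; linear_combination ((b : Bˣ) : B) * h1)
      (by rw [hdd]; grind)
      (by rw [hee]; linear_combination (1 - ((a : Bˣ) : B)) * h3)
    exact congrArg (Submodule.Quotient.mk (p := LB)) this
  inv := by
    intro x h0 h1
    obtain ⟨y, rfl⟩ := residue_surjective x
    obtain ⟨a, rfl⟩ := exists_WU h0 h1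
    have h : (residue B ((a : Bˣ) : B))⁻¹ = residue B (((WU.winv a : WU B) : Bˣ) : B) :=
      (map_units_inv _ _).symm
    have hm : gHom B (-1) = gcl ℤ (-1 : Bˣ) := by rw [← gHom_unit]; simp
    rw [h, clsP_residue LB hA, clsP_residue LB hA, hm]
    exact congrArg (Submodule.Quotient.mk (p := LB)) (rpt_inv a)
  const := by
    intro w x hw h0 h1
    obtain ⟨y, rfl⟩ := residue_surjective x
    obtain ⟨a, rfl⟩ := exists_WU h0 h1
    obtain ⟨u, rfl⟩ := isUnit_of_residue (x := w) (by rw [hw]; exact one_ne_zero)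
    have h : 1 - residue B ((a : Bˣ) : B) = residue B (((WU.oneSub a : WU B) : Bˣ) : B) := by
      change _ = residue B ((WU.usub a : Bˣ) : B)
      rw [WU.usub_coe, map_sub, map_one]
    have hm : gHom B (-1) = gcl ℤ (-1 : Bˣ) := by rw [← gHom_unit]; simp
    rw [h, clsP_residue LB hA, clsP_residue LB hA, hm, gHom_unit]
    exact hC u a hw
  big := hbig

end LocalRing

/-! ### Factoring the quotient map through `\widetilde{RP}(k)` -/

section Theta

open IsLocalRing

variable {B : Type*} [CommRing B] [IsLocalRing B] (LB : Submodule (GRing ℤ B) (RPt ℤ B))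

/-- `⟨u⟩` acts trivially on `\widetilde{RP}(B)/L_B` for `u ∈ 1 + m_B`. -/
lemma gcl_smul_of_residue_one
    (hbig : ∀ x y : ResidueField B, ∃ z : ResidueField B, z ≠ 0 ∧ z ≠ 1 ∧ z ≠ x ∧ z ≠ y)
    (hA : ∀ a a' : WU B, residue B ((a : Bˣ) : B) = residue B ((a' : Bˣ) : B) →
      cls LB a = cls LB a')
    (hC : ∀ (u : Bˣ) (a : WU B), residue B (u : B) = 1 →
      (gcl ℤ u - 1) • (cls LB a + gcl ℤ (-1 : Bˣ) • cls LB (WU.oneSub a)) = 0)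
    {u : Bˣ} (hu : residue B (u : B) = 1) (m : RPt ℤ B ⧸ LB) : gcl ℤ u • m = m := by
  obtain ⟨x, rfl⟩ := Submodule.Quotient.mk_surjective _ m
  let T : AddSubgroup (RPt ℤ B) :=
    { carrier := {x | gcl ℤ u • (Submodule.Quotient.mk x : RPt ℤ B ⧸ LB) =
        Submodule.Quotient.mk x}
      zero_mem' := smul_zero _
      add_mem' := by
        intro x y hx hy
        rw [Set.mem_ofPred_eq] at *
        rw [Submodule.Quotient.mk_add, smul_add, hx, hy]
      neg_mem' := by
        intro x hx
        rw [Set.mem_ofPred_eq] at *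
        rw [Submodule.Quotient.mk_neg, smul_neg, hx] }
  refine mem_of_gcl_smul_rpt T (fun w a => ?_) x
  have h := (redSys LB hbig hA hC).F_eq_zero (w := u) hu (x := residue B ((a : Bˣ) : B))
    (residue_unit_ne _) (WU.residue_ne_one a)
  have h' : (gcl ℤ u - 1) • cls LB a = 0 := by
    rw [← clsP_residue LB hA a, ← gHom_unit]; exact h
  rw [sub_smul, one_smul, sub_eq_zero] at h'
  change gcl ℤ u • gcl ℤ w • cls LB a = gcl ℤ w • cls LB a
  rw [smul_comm, h']

lemma exists_unit_lift (u : (ResidueField B)ˣ) : ∃ w : Bˣ, residue B (w : B) = u := by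
  obtain ⟨x, hx⟩ := residue_surjective (u : ResidueField B)
  obtain ⟨w, rfl⟩ := isUnit_of_residue (x := x) (by rw [hx]; exact u.ne_zero)
  exact ⟨w, hx⟩

/-- If `1 + m_B` acts trivially on `M`, the `R_B`-module `M` is an `R_k`-module. -/
lemma exists_action {M : Type*} [AddCommGroup M] [Module (GRing ℤ B) M]
    (h1 : ∀ u : Bˣ, residue B (u : B) = 1 → ∀ m : M, gcl ℤ u • m = m) :
    ∃ φ : GRing ℤ (ResidueField B) →+* AddMonoid.End M,
      ∀ (w : Bˣ) (u : (ResidueField B)ˣ), residue B (w : B) = u → ∀ m : M,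
        φ (gcl ℤ u) m = gcl ℤ w • m := by
  have hcongr : ∀ w w' : Bˣ, residue B (w : B) = residue B (w' : B) → ∀ m : M,
      gcl ℤ w • m = gcl ℤ w' • m := by
    intro w w' h m
    have e : w = w' * (w'⁻¹ * w) := by group
    have hu : residue B ((w'⁻¹ * w : Bˣ) : B) = 1 := by
      rw [Units.val_mul, map_mul, h, ← map_mul, Units.inv_mul, map_one]
    rw [e, gcl_mul, mul_smul, h1 _ hu]
  choose lft hlft using exists_unit_lift (B := B)
  let χ : (ResidueField B)ˣ →* AddMonoid.End M :=
    { toFun := fun u => DistribSMul.toAddMonoidHom M (gcl ℤ (lft u))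
      map_one' := by
        ext m
        exact h1 _ (by rw [hlft, Units.val_one]) m
      map_mul' := by
        intro u v
        ext m
        change gcl ℤ (lft (u * v)) • m = gcl ℤ (lft u) • gcl ℤ (lft v) • m
        rw [smul_smul, ← gcl_mul]
        refine hcongr _ _ ?_ m
        rw [hlft, Units.val_mul, Units.val_mul, map_mul, hlft, hlft] }
  have hχ : (powMonoidHom 2 : (ResidueField B)ˣ →* (ResidueField B)ˣ).range ≤ χ.ker := by
    rintro _ ⟨u, rfl⟩
    rw [MonoidHom.mem_ker, powMonoidHom_apply, map_pow, sq]
    ext m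
    change gcl ℤ (lft u) • gcl ℤ (lft u) • m = m
    rw [smul_smul, gcl_sq, one_smul]
  let χ' : SqCl (ResidueField B) →* AddMonoid.End M := QuotientGroup.lift _ χ hχ
  refine ⟨(MonoidAlgebra.lift ℤ (AddMonoid.End M) (SqCl (ResidueField B)) χ').toRingHom, ?_⟩
  intro w u hw m
  have e : MonoidAlgebra.lift ℤ (AddMonoid.End M) (SqCl (ResidueField B)) χ' (gcl ℤ u) = χ u :=
    MonoidAlgebra.lift_of _ _
  change (MonoidAlgebra.lift ℤ (AddMonoid.End M) (SqCl (ResidueField B)) χ' (gcl ℤ u)) m = _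
  rw [e]
  exact hcongr _ _ (by rw [hlft, hw]) m

/-- The quotient map `\widetilde{RP}(B) → \widetilde{RP}(B)/L_B` factors through
`\widetilde{RP}(k)`. -/
lemma exists_theta
    (hbig : ∀ x y : ResidueField B, ∃ z : ResidueField B, z ≠ 0 ∧ z ≠ 1 ∧ z ≠ x ∧ z ≠ y)
    (hA : ∀ a a' : WU B, residue B ((a : Bˣ) : B) = residue B ((a' : Bˣ) : B) →
      cls LB a = cls LB a')
    (hC : ∀ (u : Bˣ) (a : WU B), residue B (u : B) = 1 →
      (gcl ℤ u - 1) • (cls LB a + gcl ℤ (-1 : Bˣ) • cls LB (WU.oneSub a)) = 0) :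
    ∃ θ : RPt ℤ (ResidueField B) →+ RPt ℤ B ⧸ LB, ∀ (w : Bˣ) (a : WU B),
      θ (gcl ℤ (Units.map (residue B : B →* ResidueField B) w) •
        rpt ℤ (WU.mapRH (residue B) a)) = gcl ℤ w • cls LB a := by
  obtain ⟨φ, hφ⟩ := exists_action (B := B) (M := RPt ℤ B ⧸ LB)
    (fun u hu m => gcl_smul_of_residue_one LB hbig hA hC hu m)
  let inst : Module (GRing ℤ (ResidueField B)) (RPt ℤ B ⧸ LB) :=
    Module.compHom (RPt ℤ B ⧸ LB) φ
  have hact : ∀ (w : Bˣ) (u : (ResidueField B)ˣ), residue B (w : B) = u →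
      ∀ m : RPt ℤ B ⧸ LB, gcl ℤ u • m = gcl ℤ w • m := hφ
  obtain ⟨θ, hθ⟩ := exists_rpt_lift (R := ResidueField B) (M := RPt ℤ B ⧸ LB)
    (fun x => clsP LB ((x : (ResidueField B)ˣ) : ResidueField B))
    (by
      intro a b c d e hc hd he
      have one_sub_ne : ∀ x : WU (ResidueField B),
          (1 : ResidueField B) - ((x : (ResidueField B)ˣ) : ResidueField B) ≠ 0 :=
        fun x => x.2.ne_zero
      obtain ⟨A, hA'⟩ := exists_unit_lift (a : (ResidueField B)ˣ)
      obtain ⟨b', hb'⟩ := exists_unit_lift (b : (ResidueField B)ˣ)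
      obtain ⟨s, hs⟩ := isUnit_of_residue (x := 1 - (A : B)) (by
        rw [map_sub, map_one, hA']; exact one_sub_ne a)
      have a1 : ((a : (ResidueField B)ˣ) : ResidueField B) ≠ 1 :=
        fun h => one_sub_ne a (by rw [h, sub_self])
      have b1 : ((b : (ResidueField B)ˣ) : ResidueField B) ≠ 1 :=
        fun h => one_sub_ne b (by rw [h, sub_self])
      have a0 := (a : (ResidueField B)ˣ).ne_zero
      have b0 := (b : (ResidueField B)ˣ).ne_zero
      have hab : ((a : (ResidueField B)ˣ) : ResidueField B) ≠ (b : (ResidueField B)ˣ) := by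
        intro h
        refine one_sub_ne c (sub_eq_zero.2 (mul_right_cancel₀ a0 ?_).symm)
        rw [hc, one_mul, h]
      have h5 := (redSys LB hbig hA hC).five (A : B) (b' : B)
        (by change residue B (A : B) ≠ 0; rw [hA']; exact a0)
        (by change residue B (A : B) ≠ 1; rw [hA']; exact a1)
        (by change residue B (b' : B) ≠ 0; rw [hb']; exact b0)
        (by change residue B (b' : B) ≠ 1; rw [hb']; exact b1)
        (by change residue B (A : B) ≠ residue B (b' : B); rw [hA', hb']; exact hab)
      change clsP LB (residue B (A : B)) - clsP LB (residue B (b' : B))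
        + gHom B (A : B) • clsP LB (residue B (b' : B) / residue B (A : B))
        - gHom B ((A : B) * (1 - (A : B))) •
          clsP LB ((1 - (residue B (A : B))⁻¹) / (1 - (residue B (b' : B))⁻¹))
        - gHom B (1 - (A : B)) • clsP LB ((1 - residue B (A : B)) / (1 - residue B (b' : B)))
          = 0 at h5
      rw [hA', hb', ← hs, map_mul, gHom_unit, gHom_unit] at h5
      have ec : ((b : (ResidueField B)ˣ) : ResidueField B) / (a : (ResidueField B)ˣ) =
          (c : (ResidueField B)ˣ) := by rw [← hc, mul_div_cancel_right₀ _ a0]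
      have ed : (1 - ((a : (ResidueField B)ˣ) : ResidueField B)⁻¹) /
          (1 - ((b : (ResidueField B)ˣ) : ResidueField B)⁻¹) = (d : (ResidueField B)ˣ) := by
        rw [div_eq_iff (by rw [Ne, sub_eq_zero, eq_comm, inv_eq_one]; exact b1)]
        rw [Units.val_inv_eq_inv_val, Units.val_inv_eq_inv_val] at hd
        exact hd.symm
      have ee : (1 - ((a : (ResidueField B)ˣ) : ResidueField B)) /
          (1 - ((b : (ResidueField B)ˣ) : ResidueField B)) = (e : (ResidueField B)ˣ) := by
        rw [div_eq_iff (one_sub_ne b)]; exact he.symm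
      rw [ec, ed, ee] at h5
      have rs : residue B (s : B) = (WU.usub a : (ResidueField B)ˣ) := by
        rw [hs, WU.usub_coe, map_sub, map_one, hA']
      rw [gcl_uinvsub, mul_smul, hact A _ hA', hact s _ rs, hact A _ hA', hact s _ rs,
        ← mul_smul]
      exact h5)
    (by
      intro a
      have hi := (redSys LB hbig hA hC).inv ((a : (ResidueField B)ˣ) : ResidueField B)
        (Units.ne_zero _) (fun h => a.2.ne_zero (by rw [h, sub_self]))
      rw [hact (-1) (-1) (by simp)]
      have hm : gHom B (-1) = gcl ℤ (-1 : Bˣ) := by rw [← gHom_unit]; simp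
      have hw : (((WU.winv a : WU (ResidueField B)) : (ResidueField B)ˣ) : ResidueField B) =
          ((a : (ResidueField B)ˣ) : ResidueField B)⁻¹ := Units.val_inv_eq_inv_val _
      rw [hw, ← hm]
      exact hi)
  refine ⟨θ.toAddMonoidHom, fun w a => ?_⟩
  change θ _ = _
  rw [map_smul, hθ, hact w _ rfl, ← clsP_residue LB hA a]
  rfl

end Theta

/-- A field with at least five elements has an element outside `{0, 1, x, y}`. -/
lemma exists_avoid {k : Type*} [Field k] (h : 5 ≤ Nat.card k ∨ Infinite k) (x y : k) :
    ∃ z : k, z ≠ 0 ∧ z ≠ 1 ∧ z ≠ x ∧ z ≠ y := by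
  classical
  obtain ⟨z, hz⟩ : ∃ z, z ∉ ({0, 1, x, y} : Finset k) := by
    rcases h with h | h
    · by_contra! hall
      have : Finite k := Nat.finite_of_card_ne_zero (by omega)
      have : Fintype k := Fintype.ofFinite k
      have h1 : ({0, 1, x, y} : Finset k) = Finset.univ := Finset.eq_univ_iff_forall.2 hall
      have h2 := Finset.card_le_four (a := (0 : k)) (b := 1) (c := x) (d := y)
      rw [h1, Finset.card_univ, ← Nat.card_eq_fintype_card] at h2
      omega
    · exact Infinite.exists_notMem_finset _
  simp only [Finset.mem_insert, Finset.mem_singleton, not_or] at hz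
  exact ⟨z, hz⟩

/-- Lemma on the reduction map.
Let `B` be a local ring with maximal ideal `m_B` and residue field `k` with at least 5
elements.  Let `L_B` be the `R_B`-submodule of `\widetilde{RP}(B)` generated by the
elements `[au] - [a]` and `⟨⟨u⟩⟩C_B` for `a ∈ W_B`, `u ∈ 1 + m_B`.  Then there is a
short exact sequence of `R_B`-modules `0 → L_B → \widetilde{RP}(B) → \widetilde{RP}(k) → 0`,
where the right-hand map is the functorial map `ρ` induced by the reduction `B ↠ k`
(characterized by `ρ(⟨w⟩[a]) = ⟨w̄⟩[ā]`);  i.e. `ρ` is surjective with kernel exactly `L_B`. -/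
theorem stmt3
    (B : Type) [CommRing B] [IsLocalRing B]
    (hcard : 5 ≤ Nat.card (IsLocalRing.ResidueField B) ∨
      Infinite (IsLocalRing.ResidueField B))
    (C : RP ℤ B) (hC : ∀ a₀ : WU B, C = Cexpr ℤ a₀)
    (LB : Submodule (GRing ℤ B) (RPt ℤ B))
    (hLB : LB = Submodule.span (GRing ℤ B)
      ({x | ∃ (a au : WU B) (u : Bˣ), ((1 : B) - (u : B)) ∈ IsLocalRing.maximalIdeal B ∧
          (au : Bˣ) = (a : Bˣ) * u ∧ x = rpt ℤ au - rpt ℤ a} ∪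
       {x | ∃ u : Bˣ, ((1 : B) - (u : B)) ∈ IsLocalRing.maximalIdeal B ∧
          x = Submodule.Quotient.mk (gcc ℤ u • C)}))
    (ρ : RPt ℤ B →+ RPt ℤ (IsLocalRing.ResidueField B))
    (hρ : ∀ (w : Bˣ) (a : WU B),
      ρ (Submodule.Quotient.mk (gcl ℤ w • rp ℤ a)) =
        Submodule.Quotient.mk
          (gcl ℤ (Units.map ((IsLocalRing.residue B) : B →* IsLocalRing.ResidueField B) w) •
            rp ℤ (WU.mapRH (IsLocalRing.residue B) a))) :
    Function.Surjective ρ ∧ ∀ x : RPt ℤ B, (ρ x = 0 ↔ x ∈ LB) := by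
  have hmem : ∀ u : Bˣ, (1 : B) - (u : B) ∈ IsLocalRing.maximalIdeal B ↔
      IsLocalRing.residue B (u : B) = 1 := by
    intro u
    rw [← IsLocalRing.residue_eq_zero_iff, map_sub, map_one, sub_eq_zero, eq_comm]
  have hρ' : ∀ (w : Bˣ) (a : WU B), ρ (gcl ℤ w • rpt ℤ a) =
      gcl ℤ (Units.map ((IsLocalRing.residue B) : B →* IsLocalRing.ResidueField B) w) •
        rpt ℤ (WU.mapRH (IsLocalRing.residue B) a) := hρ
  -- `ρ` is semilinear along `⟨w⟩ ↦ ⟨w̄⟩`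
  have hsemi : ∀ (w : Bˣ) (x : RPt ℤ B), ρ (gcl ℤ w • x) =
      gcl ℤ (Units.map ((IsLocalRing.residue B) : B →* IsLocalRing.ResidueField B) w) • ρ x := by
    intro w x
    let T : AddSubgroup (RPt ℤ B) :=
      { carrier := {x | ρ (gcl ℤ w • x) = gcl ℤ (Units.map
          ((IsLocalRing.residue B) : B →* IsLocalRing.ResidueField B) w) • ρ x}
        zero_mem' := by rw [Set.mem_ofPred_eq, smul_zero, map_zero, smul_zero]
        add_mem' := by
          intro x y hx hy
          rw [Set.mem_ofPred_eq] at *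
          rw [smul_add, map_add, map_add, smul_add, hx, hy]
        neg_mem' := by
          intro x hx
          rw [Set.mem_ofPred_eq] at *
          rw [smul_neg, map_neg, map_neg, smul_neg, hx] }
    refine mem_of_gcl_smul_rpt T (fun v a => ?_) x
    change ρ (gcl ℤ w • gcl ℤ v • rpt ℤ a) = _ • ρ (gcl ℤ v • rpt ℤ a)
    rw [smul_smul, ← gcl_mul, hρ', hρ', smul_smul, ← gcl_mul, map_mul]
  have hker : ∀ (c : GRing ℤ B) (x : RPt ℤ B), ρ x = 0 → ρ (c • x) = 0 := by
    intro c x hx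
    refine mem_of_gcl_smul ρ.ker x (fun w => ?_) c
    rw [AddMonoidHom.mem_ker, hsemi, hx, smul_zero]
  refine ⟨?_, fun x => ⟨?_, ?_⟩⟩
  · intro y
    refine mem_of_gcl_smul_rpt ρ.range (fun v a => ?_) y
    obtain ⟨w, hw⟩ := exists_unit_lift v
    obtain ⟨z, hz⟩ := IsLocalRing.residue_surjective (R := B)
      ((a : (IsLocalRing.ResidueField B)ˣ) : IsLocalRing.ResidueField B)
    obtain ⟨a', ha'⟩ := exists_WU (x := z) (by rw [hz]; exact Units.ne_zero _)
      (by rw [hz]; exact fun h => a.2.ne_zero (by rw [h, sub_self]))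
    refine ⟨gcl ℤ w • rpt ℤ a', ?_⟩
    have e1 : Units.map ((IsLocalRing.residue B) : B →* IsLocalRing.ResidueField B) w = v :=
      Units.ext hw
    have e2 : WU.mapRH (IsLocalRing.residue B) a' = a := by
      refine Subtype.ext (Units.ext ?_)
      change IsLocalRing.residue B ((a' : Bˣ) : B) = _
      rw [ha', hz]
    rw [hρ', e1, e2]
  · have hA : ∀ a a' : WU B, IsLocalRing.residue B ((a : Bˣ) : B) =
        IsLocalRing.residue B ((a' : Bˣ) : B) → cls LB a = cls LB a' := by
      intro a a' h
      refine (Submodule.Quotient.eq LB).2 ?_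
      rw [hLB]
      refine Submodule.subset_span (Or.inl ⟨a', a, (a' : Bˣ)⁻¹ * (a : Bˣ), ?_, ?_, rfl⟩)
      · rw [hmem, Units.val_mul, map_mul, h, ← map_mul, Units.inv_mul, map_one]
      · rw [mul_inv_cancel_left]
    have hC' : ∀ (u : Bˣ) (a : WU B), IsLocalRing.residue B (u : B) = 1 →
        (gcl ℤ u - 1) • (cls LB a + gcl ℤ (-1 : Bˣ) • cls LB (WU.oneSub a)) = 0 := by
      intro u a hu
      have h1 : (Submodule.Quotient.mk (gcc ℤ u • C) : RPt ℤ B) ∈ LB := by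
        rw [hLB]
        exact Submodule.subset_span (Or.inr ⟨u, (hmem u).2 hu, rfl⟩)
      -- the `ψ₁`-term of `C_B` vanishes in `\widetilde{RP}(B)`
      have h2 : (Submodule.Quotient.mk C : RPt ℤ B) =
          rpt ℤ a + gcl ℤ (-1 : Bˣ) • rpt ℤ (WU.oneSub a) := by
        rw [hC a]
        refine (Submodule.Quotient.eq (Kpsi ℤ B)).2 ?_
        have : Cexpr ℤ a - (rp ℤ a + gcl ℤ (-1 : Bˣ) • rp ℤ (WU.oneSub a)) =
            gcc ℤ (WU.usub a) • psiOne ℤ a := by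
          rw [Cexpr, add_sub_cancel_left]
        rw [this]
        exact Submodule.smul_mem _ _ (Submodule.subset_span ⟨a, rfl⟩)
      rw [Submodule.Quotient.mk_smul, h2] at h1
      exact (Submodule.Quotient.mk_eq_zero LB).2 h1
    obtain ⟨θ, hθ⟩ := exists_theta LB (exists_avoid hcard) hA hC'
    intro hx
    -- `θ ∘ ρ` is the quotient map
    have hcomp : ∀ y : RPt ℤ B, θ (ρ y) = Submodule.Quotient.mk y := by
      intro y
      have := mem_of_gcl_smul_rpt (θ.comp ρ - LB.mkQ.toAddMonoidHom).ker (fun w a => by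
        rw [AddMonoidHom.mem_ker, AddMonoidHom.sub_apply, AddMonoidHom.comp_apply, hρ', hθ]
        exact sub_self _) y
      rw [AddMonoidHom.mem_ker, AddMonoidHom.sub_apply, sub_eq_zero] at this
      exact this
    have := hcomp x
    rw [hx, map_zero] at this
    exact (Submodule.Quotient.mk_eq_zero LB).1 this.symm
  · intro hx
    rw [hLB] at hx
    induction hx using Submodule.span_induction with
    | mem x hx =>
      rcases hx with ⟨a, au, u, hu, hau, rfl⟩ | ⟨u, hu, rfl⟩
      · have e : WU.mapRH (IsLocalRing.residue B) au = WU.mapRH (IsLocalRing.residue B) a := by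
          refine Subtype.ext (Units.ext ?_)
          change IsLocalRing.residue B ((au : Bˣ) : B) = IsLocalRing.residue B ((a : Bˣ) : B)
          rw [hau, Units.val_mul, map_mul, (hmem u).1 hu, mul_one]
        have h1 := hρ' 1 au
        have h2 := hρ' 1 a
        rw [gcl_one, one_smul] at h1 h2
        rw [map_sub, h1, h2, e, sub_self]
      · have e : Units.map ((IsLocalRing.residue B) : B →* IsLocalRing.ResidueField B) u = 1 :=
          Units.ext ((hmem u).1 hu)
        rw [Submodule.Quotient.mk_smul, gcc, sub_smul, one_smul, map_sub, hsemi, e, gcl_one,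
          one_smul, sub_self]
    | zero => exact map_zero ρ
    | add x y _ _ hx hy => rw [map_add, hx, hy, add_zero]
    | smul c x _ hx => exact hker c x hx
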